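/- Every pair (ᾱ, β̄) in the achievable storage-retrieval rate region R of the (2,2) PIR problem satisfies 3ᾱ + 8β̄ ≥ 10. -/

import Mathlib

open scoped BigOperators

namespace PIR

/-- Messages are length-`L` vectors over `F_2`. -/
abbrev Msg (L : ℕ) := Fin L → ZMod 2

/-- A (2,2) PIR code (without the correctness condition) with message length `L`
and query alphabet `Q`.  The two messages are independent and uniform on `F_2^L`;
the queries are independent of the messages (built into the model: the query
distribution `P k` for desired message `k` does not depend on the messages). -/
structure CodeBase (L : ℕ) (Q : Type) [Fintype Q] [DecidableEq Q] where
  /-- query distribution for desired message index `k` -/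
  P : Fin 2 → Q × Q → ℝ
  P_nonneg : ∀ k qq, 0 ≤ P k qq
  P_sum : ∀ k, ∑ qq : Q × Q, P k qq = 1
  /-- number of stored `F_2` symbols at database `n` -/
  stor : Fin 2 → ℕ
  /-- storage encoders -/
  phi : (n : Fin 2) → Msg L × Msg L → (Fin (stor n) → ZMod 2)
  /-- answer lengths -/
  blen : Fin 2 → Q → ℕ
  /-- deterministic answer functions -/
  ans : (n : Fin 2) → (q : Q) → (Fin (stor n) → ZMod 2) → (Fin (blen n q) → ZMod 2)
  /-- decoding functions -/
  dec : (k : Fin 2) → (q₁ q₂ : Q) → (Fin (blen 0 q₁) → ZMod 2) →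
      (Fin (blen 1 q₂) → ZMod 2) → Msg L
  /-- Privacy: for each database `n`, the joint distribution of
  `(Q_n^{[k]}, A_n^{[k]}, S_n)` is the same for `k = 1, 2`.  Since the answer
  `A_n` is the fixed deterministic function `ans` of `(Q_n, S_n)` (not
  depending on `k`), this is expressed as equality of the joint distributions of
  `(Q_n, S_n)` (messages uniform, queries independent of messages). -/
  privacy : ∀ (n : Fin 2) (q : Q) (s : Fin (stor n) → ZMod 2),
    (∑ qq : Q × Q, if (if n = 0 then qq.1 else qq.2) = q then P 0 qq else 0) *
      ((Finset.univ.filter (fun w : Msg L × Msg L => phi n w = s)).card : ℝ) =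
    (∑ qq : Q × Q, if (if n = 0 then qq.1 else qq.2) = q then P 1 qq else 0) *
      ((Finset.univ.filter (fun w : Msg L × Msg L => phi n w = s)).card : ℝ)

variable {L : ℕ} {Q : Type} [Fintype Q] [DecidableEq Q]

/-- The desired message `W_k`. -/
def target (k : Fin 2) (w : Msg L × Msg L) : Msg L := if k = 0 then w.1 else w.2

/-- The decoder output `Ŵ_k` when the realized queries are `qq` and the messages `w`. -/
def retrieved (C : CodeBase L Q) (k : Fin 2) (qq : Q × Q) (w : Msg L × Msg L) : Msg L :=
  C.dec k qq.1 qq.2 (C.ans 0 qq.1 (C.phi 0 w)) (C.ans 1 qq.2 (C.phi 1 w))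

/-- Zero-error correctness: `Ŵ_k = W_k` for all realizations. -/
def IsZeroError (C : CodeBase L Q) : Prop :=
  ∀ (k : Fin 2) (w : Msg L × Msg L) (qq : Q × Q), C.P k qq ≠ 0 →
    retrieved C k qq w = target k w

/-- The average probability of error `P_e`. -/
noncomputable def Pe (C : CodeBase L Q) : ℝ :=
  (1/2) * ∑ k : Fin 2, ∑ w : Msg L × Msg L, ∑ qq : Q × Q,
    ((2:ℝ)^(2*L))⁻¹ * C.P k qq * (if retrieved C k qq w ≠ target k w then 1 else 0)

/-- The retrieval rate `β_n = E[β_n^{(Q_n)}]` (the marginal of `Q_n` is the same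
for `k=1,2` by privacy; we use `k=1`, i.e. index `0`). -/
noncomputable def betaRate (C : CodeBase L Q) (n : Fin 2) : ℝ :=
  ∑ qq : Q × Q, C.P 0 qq * (C.blen n (if n = 0 then qq.1 else qq.2) : ℝ)

/-- A linear PIR code: storage encoders and answer functions are `F_2`-linear. -/
def IsLinear (C : CodeBase L Q) : Prop :=
  (∀ n : Fin 2, IsLinearMap (ZMod 2) (C.phi n)) ∧
  (∀ (n : Fin 2) (q : Q), IsLinearMap (ZMod 2) (C.ans n q))

/-- A bundled PIR code (with its query alphabet). -/
structure Code (L : ℕ) where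
  Q : Type
  [fQ : Fintype Q]
  [dQ : DecidableEq Q]
  base : CodeBase L Q

attribute [instance] Code.fQ Code.dQ

/-- A normalized storage-retrieval pair `(ᾱ, β̄)` is achievable. -/
def Achievable (ab : ℝ × ℝ) : Prop :=
  ∀ ε > (0:ℝ), ∃ L₀ : ℕ, ∀ L ≥ L₀, ∃ C : Code L,
    IsZeroError C.base ∧
    ((C.base.stor 0 + C.base.stor 1 : ℕ) : ℝ) / 2 ≤ L * (ab.1 + ε) ∧
    (betaRate C.base 0 + betaRate C.base 1) / 2 ≤ L * (ab.2 + ε)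

/-- Achievability by linear codes. -/
def LinAchievable (ab : ℝ × ℝ) : Prop :=
  ∀ ε > (0:ℝ), ∃ L₀ : ℕ, ∀ L ≥ L₀, ∃ C : Code L,
    IsZeroError C.base ∧ IsLinear C.base ∧
    ((C.base.stor 0 + C.base.stor 1 : ℕ) : ℝ) / 2 ≤ L * (ab.1 + ε) ∧
    (betaRate C.base 0 + betaRate C.base 1) / 2 ≤ L * (ab.2 + ε)

/-- The achievable storage-retrieval rate region `R`. -/
def Region : Set (ℝ × ℝ) := { ab | Achievable ab }

/-- The query distribution used for the `(2,2)` PIR system: for message 1,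
uniform on `{(1,1),(2,2)}`; for message 2, uniform on `{(1,2),(2,1)}`. -/
noncomputable def stdP : Fin 2 → Fin 2 × Fin 2 → ℝ :=
  fun k qq => if (k = 0 ∧ qq.1 = qq.2) ∨ (k = 1 ∧ qq.1 ≠ qq.2) then 1/2 else 0

/-!
Privacy forces the answer `B` of the second server, together with the whole storage `S₁` of the
first, to determine both messages, and symmetrically for `A` and `S₂`. Submodularity then bounds the
storage and retrieval entropies from below, but leaves the terms `H(W₁ | Sₙ)`, `H(A | W₁)` and
`H(B | W₁)`.

These cancel against the converse `3 H(W₁, W₂ | Z) ≤ 4 E[H(A | Z) + H(B | Z)]` for the capacity of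
private retrieval, which holds for every side information `Z`. Take `Z = (V₁, V₂)`, where `Vₙ` is a
copy of `W₁` given `Sₙ`, drawn conditionally independently of everything else. The answer `A` is a
function of `S₁`, so `H(A | Z) ≤ H(A | V₁) = H(A | W₁)`, and likewise `H(B | Z) ≤ H(B | W₁)`,
whereas `H(W₁, W₂ | Z) ≥ H(W₁, W₂) + H(W₁ | S₁) + H(W₁ | S₂) - 2 H(W₁)`.
-/

section Law

variable {Ω α β : Type*} [Fintype Ω] {μ : Ω → ℝ}

open Classical in
/-- The law (push-forward) of `f` under the weights `μ`, which need not have total mass one. -/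
noncomputable def law (μ : Ω → ℝ) (f : Ω → α) (a : α) : ℝ := ∑ o with f o = a, μ o

lemma law_nonneg (hμ : 0 ≤ μ) (f : Ω → α) : 0 ≤ law μ f := fun _ =>
  Finset.sum_nonneg fun o _ => hμ o

lemma law_pos (hμ : 0 ≤ μ) (f : Ω → α) {o : Ω} (ho : μ o ≠ 0) : 0 < law μ f (f o) :=
  Finset.sum_pos' (fun o _ => hμ o) ⟨o, by simp, (hμ o).lt_of_ne' ho⟩

lemma law_le_law (hμ : 0 ≤ μ) {f : Ω → α} {g : Ω → β} (h : f.FactorsThrough g) (o : Ω) :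
    law μ g (g o) ≤ law μ f (f o) := by
  classical
  exact Finset.sum_le_sum_of_subset_of_nonneg
    (Finset.monotone_filter_right _ fun _ _ hg => h hg) fun o _ _ => hμ o

lemma exists_ne_zero_of_law_ne_zero {f : Ω → α} {a : α} (h : law μ f a ≠ 0) :
    ∃ o, f o = a ∧ μ o ≠ 0 := by
  classical
  obtain ⟨o, ho, hne⟩ := Finset.exists_ne_zero_of_sum_ne_zero h
  exact ⟨o, (Finset.mem_filter.mp ho).2, hne⟩

lemma sum_law_mul (f : Ω → α) {s : Finset α} (hs : ∀ o, f o ∈ s) (u : α → ℝ) :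
    ∑ a ∈ s, law μ f a * u a = ∑ o, μ o * u (f o) := by
  classical
  rw [← Finset.sum_fiberwise_of_maps_to (fun o _ => hs o)]
  refine Finset.sum_congr rfl fun a _ => ?_
  rw [law, Finset.sum_mul]
  exact Finset.sum_congr (by congr) fun o ho => by rw [(Finset.mem_filter.mp ho).2]

lemma sum_law [Fintype α] (f : Ω → α) : ∑ a, law μ f a = ∑ o, μ o := by
  simpa using sum_law_mul f (fun o => Finset.mem_univ (f o)) 1

lemma sum_law_le (hμ : 0 ≤ μ) (f : Ω → α) (s : Finset α) : ∑ a ∈ s, law μ f a ≤ ∑ o, μ o := by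
  classical
  have hs (o : Ω) : f o ∈ s ∪ Finset.univ.image f :=
    Finset.mem_union_right _ (Finset.mem_image_of_mem f (Finset.mem_univ o))
  calc
    _ ≤ ∑ a ∈ s ∪ Finset.univ.image f, law μ f a :=
      Finset.sum_le_sum_of_subset_of_nonneg Finset.subset_union_left
        fun a _ _ => law_nonneg hμ f a
    _ = ∑ o, μ o := by simpa using sum_law_mul (μ := μ) f hs 1

lemma law_law [Fintype α] (f : Ω → α) (g : α → β) : law (law μ f) g = law μ (g ∘ f) := by
  classical
  funext b
  have h := sum_law_mul (μ := μ) f (fun o => Finset.mem_univ (f o))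
    fun a => if g a = b then 1 else 0
  simpa [law, Finset.sum_filter] using h

lemma law_fst_apply [Fintype α] (P : Ω × α → ℝ) (o : Ω) : law P Prod.fst o = ∑ a, P (o, a) := by
  classical
  rw [law, Finset.sum_filter, Fintype.sum_prod_type, Finset.sum_comm]
  simp

lemma law_snd_apply [Fintype α] (P : α × Ω → ℝ) (o : Ω) : law P Prod.snd o = ∑ a, P (a, o) := by
  classical
  rw [law, Finset.sum_filter, Fintype.sum_prod_type]
  simp

end Law

section Entropy

variable {Ω α β : Type*} [Fintype Ω] {μ : Ω → ℝ}

/-- The Shannon entropy, in bits, of `f` under the weights `μ`. It is written as the expectation of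
`-log₂ (law μ f (f o))`, so that the codomain of `f` need not be finite. -/
noncomputable def entropy (μ : Ω → ℝ) (f : Ω → α) : ℝ :=
  -∑ o, μ o * Real.logb 2 (law μ f (f o))

/-- The conditional entropy `H(f | z)`, defined through the chain rule. -/
noncomputable def condEntropy (μ : Ω → ℝ) (f : Ω → α) (z : Ω → β) : ℝ :=
  entropy μ (Function.prod f z) - entropy μ z

lemma entropy_law [Fintype α] (f : Ω → α) (g : α → β) :
    entropy (law μ f) g = entropy μ (g ∘ f) := by
  rw [entropy, entropy, law_law, sum_law_mul f (fun o => Finset.mem_univ (f o))]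
  rfl

lemma entropy_congr {f : Ω → α} {g : Ω → β}
    (h : ∀ o o', μ o ≠ 0 → μ o' ≠ 0 → (f o = f o' ↔ g o = g o')) :
    entropy μ f = entropy μ g := by
  classical
  refine congrArg Neg.neg (Finset.sum_congr rfl fun o _ => ?_)
  by_cases ho : μ o = 0
  · simp only [ho, zero_mul]
  · congr 2
    rw [law, law, Finset.sum_filter, Finset.sum_filter]
    refine Finset.sum_congr rfl fun o' _ => ?_
    by_cases ho' : μ o' = 0
    · simp only [ho', ite_self]
    · exact if_congr (h o' o ho' ho) rfl rfl

lemma entropy_mono (hμ : 0 ≤ μ) {f : Ω → α} {g : Ω → β} (h : f.FactorsThrough g) :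
    entropy μ f ≤ entropy μ g := by
  refine neg_le_neg (Finset.sum_le_sum fun o _ => ?_)
  by_cases ho : μ o = 0
  · simp only [ho, zero_mul, le_refl]
  · exact mul_le_mul_of_nonneg_left
      (Real.logb_le_logb_of_le one_lt_two (law_pos hμ g ho) (law_le_law hμ h o)) (hμ o)

lemma entropy_le_crossEntropy (hμ : 0 ≤ μ) (f : Ω → α) {q : α → ℝ} (hq : 0 ≤ q)
    (hsum : ∀ s : Finset α, ∑ a ∈ s, q a ≤ ∑ o, μ o) (hpos : ∀ o, μ o ≠ 0 → 0 < q (f o)) :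
    entropy μ f ≤ -∑ o, μ o * Real.logb 2 (q (f o)) := by
  classical
  have pointwise (o : Ω) : μ o * Real.logb 2 (q (f o)) - μ o * Real.logb 2 (law μ f (f o)) ≤
      (μ o * (q (f o) / law μ f (f o)) - μ o) / Real.log 2 := by
    by_cases ho : μ o = 0
    · simp only [ho, zero_mul, sub_zero, zero_div, le_refl]
    have hlaw := law_pos hμ f ho
    calc
      _ = μ o * Real.log (q (f o) / law μ f (f o)) / Real.log 2 := by
        rw [Real.log_div (hpos o ho).ne' hlaw.ne', Real.logb, Real.logb]; ring
      _ ≤ μ o * (q (f o) / law μ f (f o) - 1) / Real.log 2 := by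
        gcongr
        · exact hμ o
        · exact Real.log_le_sub_one_of_pos (div_pos (hpos o ho) hlaw)
      _ = _ := by ring
  have ratio : ∑ o, μ o * (q (f o) / law μ f (f o)) ≤ ∑ o, μ o := by
    rw [← sum_law_mul f (fun o => Finset.mem_image_of_mem f (Finset.mem_univ o))
      fun a => q a / law μ f a]
    refine (Finset.sum_le_sum fun a _ => ?_).trans (hsum _)
    by_cases ha : law μ f a = 0
    · rw [ha, zero_mul]
      exact hq a
    · rw [mul_div_cancel₀ _ ha]
  have total := Finset.sum_le_sum fun o (_ : o ∈ Finset.univ) => pointwise o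
  rw [Finset.sum_sub_distrib, ← Finset.sum_div, Finset.sum_sub_distrib] at total
  have : (∑ o, μ o * (q (f o) / law μ f (f o)) - ∑ o, μ o) / Real.log 2 ≤ 0 :=
    div_nonpos_of_nonpos_of_nonneg (sub_nonpos.mpr ratio) (Real.log_nonneg one_le_two)
  rw [entropy]
  linarith

lemma entropy_le_logb_card [Fintype α] (hμ : μ ∈ stdSimplex ℝ Ω) (f : Ω → α) :
    entropy μ f ≤ Real.logb 2 (Fintype.card α) := by
  obtain ⟨o, -, -⟩ := Finset.exists_ne_zero_of_sum_ne_zero (hμ.2.trans_ne one_ne_zero)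
  have hcard : (0 : ℝ) < Fintype.card α := by
    exact_mod_cast Fintype.card_pos_iff.mpr ⟨f o⟩
  have gibbs := entropy_le_crossEntropy hμ.1 f (q := fun _ => (Fintype.card α : ℝ)⁻¹)
    (fun _ => inv_nonneg.mpr hcard.le)
    (fun s => by
      rw [hμ.2, Finset.sum_const, nsmul_eq_mul, ← div_eq_mul_inv, div_le_one hcard]
      exact_mod_cast s.card_le_univ)
    (fun _ _ => inv_pos.mpr hcard)
  simpa only [Real.logb_inv, mul_neg, Finset.sum_neg_distrib, neg_neg, ← Finset.sum_mul, hμ.2,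
    one_mul] using gibbs

lemma entropy_uniform_of_injective {f : Ω → α} (hf : f.Injective) :
    entropy (fun _ => (Fintype.card Ω : ℝ)⁻¹) f = Real.logb 2 (Fintype.card Ω) := by
  classical
  cases isEmpty_or_nonempty Ω
  · simp [entropy]
  · have (o : Ω) : Finset.univ.filter (fun o' => o' = o) = {o} := by ext; simp
    simp [entropy, law, hf.eq_iff, this]

end Entropy

section CondCopy

variable {Ω α β σ : Type*} [Fintype Ω] {μ : Ω → ℝ} {S : Ω → σ}

open Classical in
/-- The law of two copies of the sample point that agree on `S` and are otherwise conditionally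
independent given `S`. For nonnegative weights the denominator vanishes only where the numerator
does. -/
noncomputable def condCopy (μ : Ω → ℝ) (S : Ω → σ) (o : Ω × Ω) : ℝ :=
  if S o.1 = S o.2 then μ o.1 * μ o.2 / law μ S (S o.1) else 0

lemma condCopy_nonneg (hμ : 0 ≤ μ) : 0 ≤ condCopy μ S := fun o => by
  unfold condCopy
  split_ifs
  · exact div_nonneg (mul_nonneg (hμ _) (hμ _)) (law_nonneg hμ S _)
  · exact le_rfl

lemma condCopy_diag_ne_zero (hμ : 0 ≤ μ) {o : Ω} (ho : μ o ≠ 0) : condCopy μ S (o, o) ≠ 0 := by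
  simp [condCopy, ho, (law_pos hμ S ho).ne']

lemma eq_of_condCopy_ne_zero {o : Ω × Ω} (ho : condCopy μ S o ≠ 0) : S o.1 = S o.2 := by
  by_contra h
  exact ho (if_neg h)

lemma ne_zero_of_condCopy_ne_zero {o : Ω × Ω} (ho : condCopy μ S o ≠ 0) :
    μ o.1 ≠ 0 ∧ μ o.2 ≠ 0 := by
  constructor <;> exact fun h => ho (by simp [condCopy, h])

lemma condCopy_swap (μ : Ω → ℝ) (S : Ω → σ) (o o' : Ω) :
    condCopy μ S (o, o') = condCopy μ S (o', o) := by
  by_cases h : S o = S o'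
  · simp [condCopy, h, mul_comm]
  · simp [condCopy, h, Ne.symm h]

lemma law_condCopy_fst (hμ : 0 ≤ μ) (S : Ω → σ) : law (condCopy μ S) Prod.fst = μ := by
  classical
  funext o
  rw [law_fst_apply]
  by_cases ho : μ o = 0
  · simp [condCopy, ho]
  calc
    ∑ o', condCopy μ S (o, o') = ∑ o' with S o' = S o, μ o * μ o' / law μ S (S o) := by
      simp only [condCopy, Finset.sum_filter, eq_comm]
    _ = μ o * law μ S (S o) / law μ S (S o) := by
      rw [← Finset.sum_div, ← Finset.mul_sum, law]
    _ = μ o := mul_div_cancel_right₀ _ (law_pos hμ S ho).ne'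

lemma law_condCopy_snd (hμ : 0 ≤ μ) (S : Ω → σ) : law (condCopy μ S) Prod.snd = μ := by
  funext o
  rw [law_snd_apply]
  simp_rw [condCopy_swap μ S _ o]
  rw [← law_fst_apply, law_condCopy_fst hμ]

lemma sum_condCopy_mul_fst (hμ : 0 ≤ μ) (S : Ω → σ) (u : Ω → ℝ) :
    ∑ o, condCopy μ S o * u o.1 = ∑ o, μ o * u o := by
  rw [← sum_law_mul Prod.fst (fun _ => Finset.mem_univ _), law_condCopy_fst hμ]

lemma sum_condCopy_mul_snd (hμ : 0 ≤ μ) (S : Ω → σ) (u : Ω → ℝ) :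
    ∑ o, condCopy μ S o * u o.2 = ∑ o, μ o * u o := by
  rw [← sum_law_mul Prod.snd (fun _ => Finset.mem_univ _), law_condCopy_snd hμ]

lemma sum_condCopy (hμ : 0 ≤ μ) (S : Ω → σ) : ∑ o, condCopy μ S o = ∑ o, μ o := by
  rw [← sum_law Prod.fst, law_condCopy_fst hμ]

lemma condCopy_mem_stdSimplex (hμ : μ ∈ stdSimplex ℝ Ω) (S : Ω → σ) :
    condCopy μ S ∈ stdSimplex ℝ (Ω × Ω) :=
  ⟨condCopy_nonneg hμ.1, (sum_condCopy hμ.1 S).trans hμ.2⟩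

lemma entropy_condCopy_fst (hμ : 0 ≤ μ) (S : Ω → σ) (f : Ω → α) :
    entropy (condCopy μ S) (f ∘ Prod.fst) = entropy μ f := by
  rw [← entropy_law, law_condCopy_fst hμ]

lemma entropy_condCopy_snd (hμ : 0 ≤ μ) (S : Ω → σ) (f : Ω → α) :
    entropy (condCopy μ S) (f ∘ Prod.snd) = entropy μ f := by
  rw [← entropy_law, law_condCopy_snd hμ]

lemma law_condCopy_map {f : Ω → α} {g : Ω → β} (hf : S.FactorsThrough f)
    (hg : S.FactorsThrough g) {o : Ω × Ω} (ho : S o.1 = S o.2) :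
    law (condCopy μ S) (Prod.map f g) (Prod.map f g o) =
      law μ f (f o.1) * law μ g (g o.2) / law μ S (S o.1) := by
  classical
  have fiber (o' : Ω × Ω) (h : Prod.map f g o' = Prod.map f g o) :
      condCopy μ S o' = μ o'.1 * μ o'.2 / law μ S (S o.1) := by
    obtain ⟨h₁, h₂⟩ := Prod.ext_iff.mp h
    have hS : S o'.1 = S o.1 := hf h₁
    rw [condCopy, if_pos ((hS.trans ho).trans (hg h₂).symm), hS]
  calc
    _ = ∑ o' : Ω × Ω with f o'.1 = f o.1 ∧ g o'.2 = g o.2, μ o'.1 * μ o'.2 / law μ S (S o.1) := by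
      refine Finset.sum_congr (by ext; simp [Prod.ext_iff]) fun o' h => fiber o' ?_
      simpa [Prod.ext_iff] using h
    _ = _ := by
      rw [← Finset.sum_div, ← Finset.univ_product_univ,
        Finset.filter_product (fun o₁ => f o₁ = f o.1) (fun o₂ => g o₂ = g o.2),
        Finset.sum_product, ← Finset.sum_mul_sum]
      simp only [law]

lemma logb_law_condCopy_map (hμ : 0 ≤ μ) {f : Ω → α} {g : Ω → β} (hf : S.FactorsThrough f)
    (hg : S.FactorsThrough g) {o : Ω × Ω} (ho : S o.1 = S o.2) (h₁ : μ o.1 ≠ 0)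
    (h₂ : μ o.2 ≠ 0) :
    Real.logb 2 (law (condCopy μ S) (Prod.map f g) (Prod.map f g o)) =
      Real.logb 2 (law μ f (f o.1)) + Real.logb 2 (law μ g (g o.2)) -
        Real.logb 2 (law μ S (S o.1)) := by
  have hf₁ := law_pos hμ f h₁
  have hg₂ := law_pos hμ g h₂
  rw [law_condCopy_map hf hg ho, Real.logb_div (mul_pos hf₁ hg₂).ne' (law_pos hμ S h₁).ne',
    Real.logb_mul hf₁.ne' hg₂.ne']

lemma entropy_condCopy_map (hμ : 0 ≤ μ) {f : Ω → α} {g : Ω → β} (hf : S.FactorsThrough f)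
    (hg : S.FactorsThrough g) :
    entropy (condCopy μ S) (Prod.map f g) = entropy μ f + entropy μ g - entropy μ S := by
  have expand (o : Ω × Ω) : condCopy μ S o *
      Real.logb 2 (law (condCopy μ S) (Prod.map f g) (Prod.map f g o)) =
        condCopy μ S o * Real.logb 2 (law μ f (f o.1)) +
        condCopy μ S o * Real.logb 2 (law μ g (g o.2)) -
        condCopy μ S o * Real.logb 2 (law μ S (S o.1)) := by
    by_cases ho : condCopy μ S o = 0
    · simp only [ho, zero_mul, add_zero, sub_zero]
    · obtain ⟨h₁, h₂⟩ := ne_zero_of_condCopy_ne_zero ho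
      rw [logb_law_condCopy_map hμ hf hg (eq_of_condCopy_ne_zero ho) h₁ h₂]
      ring
  simp only [entropy, expand, Finset.sum_sub_distrib, Finset.sum_add_distrib,
    sum_condCopy_mul_fst hμ S fun o => Real.logb 2 (law μ f (f o)),
    sum_condCopy_mul_snd hμ S fun o => Real.logb 2 (law μ g (g o)),
    sum_condCopy_mul_fst hμ S fun o => Real.logb 2 (law μ S (S o))]
  ring

lemma entropy_condCopy_map_of_factorsThrough (hμ : 0 ≤ μ) {f : Ω → α} (hf : f.FactorsThrough S)
    (V : Ω → β) :
    entropy (condCopy μ S) (Prod.map f V) = entropy μ (Function.prod f V) := by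
  rw [← entropy_condCopy_snd hμ S]
  refine entropy_congr fun o o' ho ho' => ?_
  have h := hf (eq_of_condCopy_ne_zero ho)
  have h' := hf (eq_of_condCopy_ne_zero ho')
  simp only [Prod.map, Function.comp_apply, Function.prod_apply, Prod.mk.injEq, h, h']

lemma entropy_condCopy_map_eq_add_condEntropy (hμ : 0 ≤ μ) {f : Ω → α}
    (hf : S.FactorsThrough f) (V : Ω → β) :
    entropy (condCopy μ S) (Prod.map f V) = entropy μ f + condEntropy μ V S := by
  calc
    _ = entropy (condCopy μ S) (Prod.map f (Function.prod V S)) := by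
      refine entropy_congr fun o o' ho ho' => ?_
      have h := eq_of_condCopy_ne_zero ho
      have h' := eq_of_condCopy_ne_zero ho'
      simp only [Prod.map, Function.prod_apply, Prod.mk.injEq, ← h, ← h']
      exact and_congr_right fun hff => (and_iff_left (hf hff)).symm
    _ = _ := by
      rw [entropy_condCopy_map hμ hf fun _ _ h => congrArg Prod.snd h, condEntropy]
      ring

end CondCopy

section Submodularity

variable {Ω α β γ δ ε : Type*} [Fintype Ω] {μ : Ω → ℝ}

/-- This is Gibbs' inequality for `(f, g)` against its version conditionally independent given
`z`. -/
lemma entropy_prod_add_entropy_le (hμ : 0 ≤ μ) {f : Ω → α} {g : Ω → β} {z : Ω → γ}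
    (hf : z.FactorsThrough f) (hg : z.FactorsThrough g) :
    entropy μ (Function.prod f g) + entropy μ z ≤ entropy μ f + entropy μ g := by
  have gibbs := entropy_le_crossEntropy hμ (Function.prod f g)
    (q := law (condCopy μ z) (Prod.map f g)) (law_nonneg (condCopy_nonneg hμ) _)
    (fun s => (sum_law_le (condCopy_nonneg hμ) _ s).trans_eq (sum_condCopy hμ z))
    (fun o ho => law_pos (condCopy_nonneg hμ) (Prod.map f g) (condCopy_diag_ne_zero hμ ho))
  have expand (o : Ω) : μ o * Real.logb 2 (law (condCopy μ z) (Prod.map f g) (f o, g o)) =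
      μ o * Real.logb 2 (law μ f (f o)) + μ o * Real.logb 2 (law μ g (g o)) -
        μ o * Real.logb 2 (law μ z (z o)) := by
    by_cases ho : μ o = 0
    · simp only [ho, zero_mul, add_zero, sub_zero]
    · have := logb_law_condCopy_map hμ hf hg (o := (o, o)) rfl ho ho
      simp only [Prod.map] at this
      rw [this]
      ring
  simp only [Function.prod_apply, expand, Finset.sum_sub_distrib, Finset.sum_add_distrib] at gibbs
  simp only [entropy] at gibbs ⊢
  linarith

lemma entropy_add_entropy_le (hμ : 0 ≤ μ) {f : Ω → α} {g : Ω → β} {k : Ω → δ} {z : Ω → γ}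
    (hf : z.FactorsThrough f) (hg : z.FactorsThrough g)
    (hk : k.FactorsThrough (Function.prod f g)) :
    entropy μ k + entropy μ z ≤ entropy μ f + entropy μ g := by
  linarith [entropy_mono hμ hk, entropy_prod_add_entropy_le hμ hf hg]

lemma condEntropy_add_condEntropy_le (hμ : 0 ≤ μ) (y : Ω → ε) {f : Ω → α} {g : Ω → β} {k : Ω → δ}
    {z : Ω → γ} (hf : z.FactorsThrough f) (hg : z.FactorsThrough g)
    (hk : k.FactorsThrough (Function.prod f g)) :
    condEntropy μ k y + condEntropy μ z y ≤ condEntropy μ f y + condEntropy μ g y := by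
  have h : entropy μ (Function.prod k y) + entropy μ (Function.prod z y) ≤
      entropy μ (Function.prod f y) + entropy μ (Function.prod g y) := by
    apply entropy_add_entropy_le hμ <;> grind [Function.FactorsThrough]
  unfold condEntropy
  linarith

lemma condEntropy_le_add (hμ : 0 ≤ μ) (y : Ω → ε) {f : Ω → α} {g : Ω → β} {k : Ω → δ}
    (hk : k.FactorsThrough (Function.prod f g)) :
    condEntropy μ k y ≤ condEntropy μ f y + condEntropy μ g y := by
  have h : entropy μ (Function.prod k y) + entropy μ y ≤
      entropy μ (Function.prod f y) + entropy μ (Function.prod g y) := by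
    apply entropy_add_entropy_le hμ <;> grind [Function.FactorsThrough]
  unfold condEntropy
  linarith

lemma condEntropy_anti (hμ : 0 ≤ μ) (f : Ω → α) {x : Ω → β} {y : Ω → γ}
    (h : x.FactorsThrough y) : condEntropy μ f y ≤ condEntropy μ f x := by
  have submodular : entropy μ (Function.prod f y) + entropy μ x ≤
      entropy μ (Function.prod f x) + entropy μ y := by
    apply entropy_add_entropy_le hμ <;> grind [Function.FactorsThrough]
  unfold condEntropy
  linarith

lemma condEntropy_prod_comm (f : Ω → α) (g : Ω → β) (z : Ω → γ) :
    condEntropy μ (Function.prod f g) z = condEntropy μ (Function.prod g f) z :=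
  congrArg (· - entropy μ z) <| entropy_congr fun o o' _ _ => by grind

lemma entropy_add_condEntropy (f : Ω → α) (g : Ω → β) :
    entropy μ f + condEntropy μ g f = entropy μ (Function.prod g f) := by
  rw [condEntropy]
  ring

lemma entropy_const (hμ : μ ∈ stdSimplex ℝ Ω) (c : α) : entropy μ (fun _ => c) = 0 := by
  simp [entropy, law, hμ.2]

lemma entropy_prod_le_add (hμ : μ ∈ stdSimplex ℝ Ω) (f : Ω → α) (g : Ω → β) :
    entropy μ (Function.prod f g) ≤ entropy μ f + entropy μ g := by
  have h := entropy_prod_add_entropy_le hμ.1 (f := f) (g := g) (z := fun _ => ())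
    (fun _ _ _ => rfl) (fun _ _ _ => rfl)
  rwa [entropy_const hμ, add_zero] at h

end Submodularity

section DoubleCopy

variable {Ω α σ₁ σ₂ τ : Type*} [Fintype Ω] {μ : Ω → ℝ} {S₁ : Ω → σ₁} {S₂ : Ω → σ₂}

/-- The law of a sample point `o.1.1` together with a copy `o.1.2` of it given `S₁` and a second
copy `o.2.1` of it given `S₂`. The component `o.2.2` is a by-product of iterating `condCopy`. -/
noncomputable def doubleCopy (μ : Ω → ℝ) (S₁ : Ω → σ₁) (S₂ : Ω → σ₂) :
    (Ω × Ω) × (Ω × Ω) → ℝ :=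
  condCopy (condCopy μ S₁) (S₂ ∘ Prod.fst)

lemma doubleCopy_mem_stdSimplex (hμ : μ ∈ stdSimplex ℝ Ω) (S₁ : Ω → σ₁) (S₂ : Ω → σ₂) :
    doubleCopy μ S₁ S₂ ∈ stdSimplex ℝ ((Ω × Ω) × (Ω × Ω)) :=
  condCopy_mem_stdSimplex (condCopy_mem_stdSimplex hμ S₁) (S₂ ∘ Prod.fst)

lemma condEntropy_doubleCopy_left (hμ : 0 ≤ μ) {f : Ω → α} (hf : f.FactorsThrough S₁)
    (V : Ω → τ) :
    condEntropy (doubleCopy μ S₁ S₂) (f ∘ Prod.fst ∘ Prod.fst) (V ∘ Prod.snd ∘ Prod.fst) =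
      condEntropy μ f V := by
  unfold condEntropy doubleCopy
  rw [← entropy_condCopy_map_of_factorsThrough hμ hf V, ← entropy_condCopy_snd hμ S₁ V,
    ← entropy_condCopy_fst (condCopy_nonneg hμ) (S₂ ∘ Prod.fst),
    ← entropy_condCopy_fst (condCopy_nonneg hμ) (S₂ ∘ Prod.fst)]
  rfl

lemma condEntropy_doubleCopy_right (hμ : 0 ≤ μ) {f : Ω → α} (hf : f.FactorsThrough S₂)
    (V : Ω → τ) :
    condEntropy (doubleCopy μ S₁ S₂) (f ∘ Prod.fst ∘ Prod.fst) (V ∘ Prod.fst ∘ Prod.snd) =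
      condEntropy μ f V := by
  have h := entropy_condCopy_map_of_factorsThrough (condCopy_nonneg hμ (S := S₁))
    (hf.comp_right Prod.fst) (V ∘ Prod.fst)
  unfold condEntropy doubleCopy
  rw [← entropy_condCopy_fst hμ S₁ (Function.prod f V), ← entropy_condCopy_fst hμ S₁ V,
    ← entropy_condCopy_snd (condCopy_nonneg hμ) (S₂ ∘ Prod.fst) (V ∘ Prod.fst)]
  exact congrArg (· - _) h

lemma entropy_doubleCopy (hμ : 0 ≤ μ) {f : Ω → α} (hf₁ : S₁.FactorsThrough f)
    (hf₂ : S₂.FactorsThrough f) (V : Ω → τ) :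
    entropy (doubleCopy μ S₁ S₂) (Prod.map (Prod.map f V) (V ∘ Prod.fst)) =
      entropy μ f + condEntropy μ V S₁ + condEntropy μ V S₂ := by
  have hS₂ : (S₂ ∘ Prod.fst).FactorsThrough (Prod.map f V) :=
    fun _ _ h => hf₂ (congrArg Prod.fst h)
  have copy_given_S₂ : condEntropy (condCopy μ S₁) (V ∘ Prod.fst) (S₂ ∘ Prod.fst) =
      condEntropy μ V S₂ := by
    rw [condEntropy, condEntropy, ← entropy_condCopy_fst hμ S₁ (Function.prod V S₂),
      ← entropy_condCopy_fst hμ S₁ S₂, Function.prod_comp]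
  rw [doubleCopy, entropy_condCopy_map_eq_add_condEntropy (condCopy_nonneg hμ) hS₂, copy_given_S₂,
    entropy_condCopy_map_eq_add_condEntropy hμ hf₁]

lemma entropy_sub_le_condEntropy_doubleCopy (hμ : μ ∈ stdSimplex ℝ Ω) {f : Ω → α}
    (hf₁ : S₁.FactorsThrough f) (hf₂ : S₂.FactorsThrough f) (V : Ω → τ) :
    entropy μ f + condEntropy μ V S₁ + condEntropy μ V S₂ - 2 * entropy μ V ≤
      condEntropy (doubleCopy μ S₁ S₂) (f ∘ Prod.fst ∘ Prod.fst)
        (Function.prod (V ∘ Prod.snd ∘ Prod.fst) (V ∘ Prod.fst ∘ Prod.snd)) := by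
  have hκ := condCopy_mem_stdSimplex hμ S₁
  have joint : entropy (doubleCopy μ S₁ S₂) (Function.prod (f ∘ Prod.fst ∘ Prod.fst)
      (Function.prod (V ∘ Prod.snd ∘ Prod.fst) (V ∘ Prod.fst ∘ Prod.snd))) =
      entropy μ f + condEntropy μ V S₁ + condEntropy μ V S₂ := by
    rw [← entropy_doubleCopy hμ.1 hf₁ hf₂]
    exact entropy_congr fun o o' _ _ => by simp [Prod.map, and_assoc]
  have left : entropy (doubleCopy μ S₁ S₂) (V ∘ Prod.snd ∘ Prod.fst) = entropy μ V :=
    (entropy_condCopy_fst hκ.1 (S₂ ∘ Prod.fst) (V ∘ Prod.snd)).trans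
      (entropy_condCopy_snd hμ.1 S₁ V)
  have right : entropy (doubleCopy μ S₁ S₂) (V ∘ Prod.fst ∘ Prod.snd) = entropy μ V :=
    (entropy_condCopy_snd hκ.1 (S₂ ∘ Prod.fst) (V ∘ Prod.fst)).trans
      (entropy_condCopy_fst hμ.1 S₁ V)
  have copies := entropy_prod_le_add (doubleCopy_mem_stdSimplex hμ S₁ S₂)
    (V ∘ Prod.snd ∘ Prod.fst) (V ∘ Prod.fst ∘ Prod.snd)
  rw [← joint, condEntropy]
  linarith

end DoubleCopy

section Averaging

variable {ι κ₁ κ₂ : Type*} [Fintype ι] [Fintype κ₁] [Fintype κ₂] {P : ι → ℝ}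

lemma sum_mul_le_sum_mul_of_ne_zero (hP : 0 ≤ P) {u v : ι → ℝ} (h : ∀ i, P i ≠ 0 → u i ≤ v i) :
    ∑ i, P i * u i ≤ ∑ i, P i * v i := by
  refine Finset.sum_le_sum fun i _ => ?_
  by_cases hi : P i = 0
  · simp only [hi, zero_mul, le_refl]
  · exact mul_le_mul_of_nonneg_left (h i hi) (hP i)

lemma le_sum_mul_of_ne_zero (hP : P ∈ stdSimplex ℝ ι) {c : ℝ} {v : ι → ℝ}
    (h : ∀ i, P i ≠ 0 → c ≤ v i) : c ≤ ∑ i, P i * v i := by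
  simpa only [← Finset.sum_mul, hP.2, one_mul] using sum_mul_le_sum_mul_of_ne_zero hP.1 h

lemma sum_mul_add_congr {P P' : κ₁ × κ₂ → ℝ} (hfst : law P Prod.fst = law P' Prod.fst)
    (hsnd : law P Prod.snd = law P' Prod.snd) (u : κ₁ → ℝ) (v : κ₂ → ℝ) :
    ∑ q, P q * (u q.1 + v q.2) = ∑ q, P' q * (u q.1 + v q.2) := by
  have expand (R : κ₁ × κ₂ → ℝ) : ∑ q, R q * (u q.1 + v q.2) =
      ∑ a, law R Prod.fst a * u a + ∑ b, law R Prod.snd b * v b := by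
    rw [sum_law_mul _ (fun _ => Finset.mem_univ _), sum_law_mul _ (fun _ => Finset.mem_univ _),
      ← Finset.sum_add_distrib]
    simp only [mul_add]
  rw [expand, expand, hfst, hsnd]

end Averaging

section Edge

variable {Ω α β σ ω ω' : Type*} [Fintype Ω] {μ : Ω → ℝ} {A : Ω → α} {B : Ω → β} {S : Ω → σ}
  {w : Ω → ω} {w' : Ω → ω'}

lemma entropy_add_condEntropy_le (hμ : μ ∈ stdSimplex ℝ Ω)
    (hw : w.FactorsThrough (Function.prod A B)) :
    entropy μ w + condEntropy μ A w ≤ entropy μ A + entropy μ B := by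
  rw [entropy_add_condEntropy]
  refine (entropy_mono hμ.1 ?_).trans (entropy_prod_le_add hμ A B)
  grind [Function.FactorsThrough]

lemma entropy_prod_add_entropy_add_condEntropy_le (hμ : μ ∈ stdSimplex ℝ Ω)
    (hA : A.FactorsThrough S) (hw : w.FactorsThrough (Function.prod A B))
    (hw' : w'.FactorsThrough (Function.prod S B)) :
    entropy μ (Function.prod w w') + entropy μ w + condEntropy μ A w ≤
      entropy μ A + entropy μ B + entropy μ S + condEntropy μ w S := by
  have submodular : entropy μ (Function.prod w w') + entropy μ (Function.prod A w) ≤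
      entropy μ (Function.prod w S) + entropy μ (Function.prod A B) := by
    apply entropy_add_entropy_le hμ.1 <;> grind [Function.FactorsThrough]
  linarith [entropy_add_condEntropy (μ := μ) w A, entropy_add_condEntropy (μ := μ) S w,
    entropy_prod_le_add hμ A B]

end Edge

section Retrieval

variable {Ω Ω' κ₁ κ₂ ω ω' σ₁ σ₂ τ ζ : Type*} [Fintype κ₁] [Fintype κ₂]
  {α : κ₁ → Type*} {β : κ₂ → Type*} {P P' : κ₁ × κ₂ → ℝ} {w : Ω → ω} {w' : Ω → ω'}
  {A : (a : κ₁) → Ω → α a} {B : (b : κ₂) → Ω → β b} {S₁ : Ω → σ₁} {S₂ : Ω → σ₂}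

/-- Private retrieval of `w` or `w'` from two servers: `A a` and `B b` are the answers to the
queries `a` and `b`, the pair of queries is drawn from `P` in order to retrieve `w` and from `P'` in
order to retrieve `w'`, and neither server can tell the two cases apart by its own query. -/
structure IsPrivateRetrieval (P P' : κ₁ × κ₂ → ℝ) (w : Ω → ω) (w' : Ω → ω')
    (A : (a : κ₁) → Ω → α a) (B : (b : κ₂) → Ω → β b) : Prop where
  mem_stdSimplex : P ∈ stdSimplex ℝ (κ₁ × κ₂)
  mem_stdSimplex' : P' ∈ stdSimplex ℝ (κ₁ × κ₂)
  law_fst : law P Prod.fst = law P' Prod.fst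
  law_snd : law P Prod.snd = law P' Prod.snd
  decodable : ∀ q, P q ≠ 0 → w.FactorsThrough (Function.prod (A q.1) (B q.2))
  decodable' : ∀ q, P' q ≠ 0 → w'.FactorsThrough (Function.prod (A q.1) (B q.2))

namespace IsPrivateRetrieval

lemma symm (h : IsPrivateRetrieval P P' w w' A B) : IsPrivateRetrieval P' P w' w A B :=
  ⟨h.2, h.1, h.3.symm, h.4.symm, h.6, h.5⟩

lemma comp (h : IsPrivateRetrieval P P' w w' A B) (π : Ω' → Ω) :
    IsPrivateRetrieval P P' (w ∘ π) (w' ∘ π) (fun a => A a ∘ π) (fun b => B b ∘ π) where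
  __ := h
  decodable q hq := (h.decodable q hq).comp_right π
  decodable' q hq := (h.decodable' q hq).comp_right π

lemma factorsThrough_prod_storage_left (h : IsPrivateRetrieval P P' w w' A B)
    (hA : ∀ a, (A a).FactorsThrough S₁) {q : κ₁ × κ₂} (hq : P q ≠ 0) :
    w'.FactorsThrough (Function.prod S₁ (B q.2)) := by
  have hlaw : law P' Prod.snd q.2 ≠ 0 := h.law_snd ▸ (law_pos h.mem_stdSimplex.1 Prod.snd hq).ne'
  obtain ⟨q', hq'₂, hq'⟩ := exists_ne_zero_of_law_ne_zero hlaw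
  intro o o' ho
  obtain ⟨hS, hB⟩ := Prod.ext_iff.mp ho
  rw [← hq'₂] at hB
  exact h.decodable' q' hq' (Prod.ext (hA q'.1 hS) hB)

lemma factorsThrough_prod_storage_right (h : IsPrivateRetrieval P P' w w' A B)
    (hB : ∀ b, (B b).FactorsThrough S₂) {q : κ₁ × κ₂} (hq : P q ≠ 0) :
    w'.FactorsThrough (Function.prod S₂ (A q.1)) := by
  have hlaw : law P' Prod.fst q.1 ≠ 0 := h.law_fst ▸ (law_pos h.mem_stdSimplex.1 Prod.fst hq).ne'
  obtain ⟨q', hq'₁, hq'⟩ := exists_ne_zero_of_law_ne_zero hlaw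
  intro o o' ho
  obtain ⟨hS, hA⟩ := Prod.ext_iff.mp ho
  rw [← hq'₁] at hA
  exact h.decodable' q' hq' (Prod.ext hA (hB q'.2 hS))

variable [Fintype Ω] {μ : Ω → ℝ}

/-- Submodularity is applied to `(A, w)` and `(B, w)` for the queries that retrieve `w'`. Privacy
turns the average over `P'` into one over `P`, and there the answers already determine `w`. -/
lemma condEntropy_prod_add_condEntropy_le (h : IsPrivateRetrieval P P' w w' A B) (hμ : 0 ≤ μ)
    (z : Ω → ζ) :
    condEntropy μ (Function.prod w w') z + condEntropy μ w z ≤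
      2 * ∑ q, P q * (condEntropy μ (A q.1) z + condEntropy μ (B q.2) z) := by
  calc
    _ ≤ ∑ q, P' q * (condEntropy μ (Function.prod (A q.1) w) z +
          condEntropy μ (Function.prod (B q.2) w) z) :=
      le_sum_mul_of_ne_zero h.mem_stdSimplex' fun q hq => by
        have := h.decodable' q hq
        apply condEntropy_add_condEntropy_le hμ <;> grind [Function.FactorsThrough]
    _ = ∑ q, P q * (condEntropy μ (Function.prod (A q.1) w) z +
          condEntropy μ (Function.prod (B q.2) w) z) :=
      (sum_mul_add_congr h.law_fst h.law_snd
        (fun a => condEntropy μ (Function.prod (A a) w) z)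
        fun b => condEntropy μ (Function.prod (B b) w) z).symm
    _ ≤ ∑ q, P q * (2 * (condEntropy μ (A q.1) z + condEntropy μ (B q.2) z)) :=
      sum_mul_le_sum_mul_of_ne_zero h.mem_stdSimplex.1 fun q hq => by
        have := h.decodable q hq
        have hA : condEntropy μ (Function.prod (A q.1) w) z ≤
            condEntropy μ (A q.1) z + condEntropy μ (B q.2) z := by
          apply condEntropy_le_add hμ; grind [Function.FactorsThrough]
        have hB : condEntropy μ (Function.prod (B q.2) w) z ≤
            condEntropy μ (A q.1) z + condEntropy μ (B q.2) z := by
          apply condEntropy_le_add hμ; grind [Function.FactorsThrough]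
        linarith
    _ = _ := by
      rw [Finset.mul_sum]
      exact Finset.sum_congr rfl fun _ _ => by ring

lemma three_mul_condEntropy_le (h : IsPrivateRetrieval P P' w w' A B) (hμ : 0 ≤ μ) (z : Ω → ζ) :
    3 * condEntropy μ (Function.prod w w') z ≤
      4 * ∑ q, P q * (condEntropy μ (A q.1) z + condEntropy μ (B q.2) z) := by
  have half := h.condEntropy_prod_add_condEntropy_le hμ z
  have half' := h.symm.condEntropy_prod_add_condEntropy_le hμ z
  rw [condEntropy_prod_comm, ← sum_mul_add_congr h.law_fst h.law_snd
    (fun a => condEntropy μ (A a) z) fun b => condEntropy μ (B b) z] at half'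
  linarith [condEntropy_le_add hμ z (Function.FactorsThrough.rfl (f := Function.prod w w'))]

lemma three_mul_entropy_add_condEntropy_storage_le (h : IsPrivateRetrieval P P' w w' A B)
    (hμ : μ ∈ stdSimplex ℝ Ω) (hS₁ : S₁.FactorsThrough (Function.prod w w'))
    (hS₂ : S₂.FactorsThrough (Function.prod w w')) (hA : ∀ a, (A a).FactorsThrough S₁)
    (hB : ∀ b, (B b).FactorsThrough S₂) (V : Ω → τ) :
    3 * (entropy μ (Function.prod w w') + condEntropy μ V S₁ + condEntropy μ V S₂ -
        2 * entropy μ V) ≤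
      4 * ∑ q, P q * (condEntropy μ (A q.1) V + condEntropy μ (B q.2) V) := by
  have hκ := (doubleCopy_mem_stdSimplex hμ S₁ S₂).1
  have hcopies := entropy_sub_le_condEntropy_doubleCopy hμ hS₁ hS₂ V
  have hconverse := (h.comp (Prod.fst ∘ Prod.fst)).three_mul_condEntropy_le hκ
    (Function.prod (V ∘ Prod.snd ∘ Prod.fst) (V ∘ Prod.fst ∘ Prod.snd))
  have hanswers : ∑ q, P q * (condEntropy (doubleCopy μ S₁ S₂) (A q.1 ∘ Prod.fst ∘ Prod.fst)
        (Function.prod (V ∘ Prod.snd ∘ Prod.fst) (V ∘ Prod.fst ∘ Prod.snd)) +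
      condEntropy (doubleCopy μ S₁ S₂) (B q.2 ∘ Prod.fst ∘ Prod.fst)
        (Function.prod (V ∘ Prod.snd ∘ Prod.fst) (V ∘ Prod.fst ∘ Prod.snd))) ≤
      ∑ q, P q * (condEntropy μ (A q.1) V + condEntropy μ (B q.2) V) :=
    sum_mul_le_sum_mul_of_ne_zero h.mem_stdSimplex.1 fun q _ => add_le_add
      ((condEntropy_anti hκ _ fun _ _ => congrArg Prod.fst).trans_eq
        (condEntropy_doubleCopy_left hμ.1 (hA q.1) V))
      ((condEntropy_anti hκ _ fun _ _ => congrArg Prod.snd).trans_eq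
        (condEntropy_doubleCopy_right hμ.1 (hB q.2) V))
  rw [Function.prod_comp] at hcopies
  linarith

theorem nine_mul_entropy_add_two_mul_entropy_le (h : IsPrivateRetrieval P P' w w' A B)
    (hμ : μ ∈ stdSimplex ℝ Ω) (hS₁ : S₁.FactorsThrough (Function.prod w w'))
    (hS₂ : S₂.FactorsThrough (Function.prod w w')) (hA : ∀ a, (A a).FactorsThrough S₁)
    (hB : ∀ b, (B b).FactorsThrough S₂) :
    9 * entropy μ (Function.prod w w') + 2 * entropy μ w ≤
      3 * (entropy μ S₁ + entropy μ S₂) +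
        8 * ∑ q, P q * (entropy μ (A q.1) + entropy μ (B q.2)) := by
  have edge (q : κ₁ × κ₂) (hq : P q ≠ 0) :
      6 * entropy μ (Function.prod w w') + 8 * entropy μ w - 3 * (entropy μ S₁ + entropy μ S₂) -
          3 * (condEntropy μ w S₁ + condEntropy μ w S₂) ≤
        8 * (entropy μ (A q.1) + entropy μ (B q.2)) -
          4 * (condEntropy μ (A q.1) w + condEntropy μ (B q.2) w) := by
    have hw := h.decodable q hq
    have hw_swap : w.FactorsThrough (Function.prod (B q.2) (A q.1)) := by
      grind [Function.FactorsThrough]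
    linarith [entropy_prod_add_entropy_add_condEntropy_le hμ (hA q.1) hw
        (h.factorsThrough_prod_storage_left hA hq),
      entropy_prod_add_entropy_add_condEntropy_le hμ (hB q.2) hw_swap
        (h.factorsThrough_prod_storage_right hB hq),
      entropy_add_condEntropy_le hμ hw, entropy_add_condEntropy_le hμ hw_swap]
  have average := le_sum_mul_of_ne_zero h.mem_stdSimplex edge
  simp only [mul_sub, Finset.sum_sub_distrib, mul_left_comm (P _), ← Finset.mul_sum] at average
  have copies := h.three_mul_entropy_add_condEntropy_storage_le hμ hS₁ hS₂ hA hB w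
  linarith

end IsPrivateRetrieval

end Retrieval

section Code

/-- The law of the pair of messages: independent and uniform. -/
noncomputable def messageLaw (L : ℕ) : Msg L × Msg L → ℝ :=
  fun _ => (Fintype.card (Msg L × Msg L) : ℝ)⁻¹

lemma messageLaw_mem_stdSimplex (L : ℕ) : messageLaw L ∈ stdSimplex ℝ (Msg L × Msg L) :=
  ⟨fun _ => by unfold messageLaw; positivity, by
    simp only [messageLaw, Finset.sum_const, Finset.card_univ, nsmul_eq_mul]
    exact mul_inv_cancel₀ (Nat.cast_ne_zero.mpr Fintype.card_ne_zero)⟩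

lemma logb_card_vec (n : ℕ) : Real.logb 2 (Fintype.card (Fin n → ZMod 2)) = n := by
  rw [Fintype.card_fun, ZMod.card, Fintype.card_fin, Nat.cast_pow, Nat.cast_ofNat, Real.logb_pow,
    Real.logb_self_eq_one one_lt_two, mul_one]

lemma entropy_vec_le {Ω : Type*} [Fintype Ω] {μ : Ω → ℝ} (hμ : μ ∈ stdSimplex ℝ Ω) {n : ℕ}
    (f : Ω → Fin n → ZMod 2) : entropy μ f ≤ n :=
  (entropy_le_logb_card hμ f).trans_eq (logb_card_vec n)

lemma entropy_messages (L : ℕ) :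
    entropy (messageLaw L) (Function.prod (target 0) (target 1)) = 2 * L := by
  have hinj : (Function.prod (target (L := L) 0) (target 1)).Injective := fun _ _ h => h
  have hcard : (Fintype.card (Msg L) : ℝ) ≠ 0 := by exact_mod_cast Fintype.card_ne_zero
  calc
    _ = Real.logb 2 (Fintype.card (Msg L × Msg L)) := entropy_uniform_of_injective hinj
    _ = 2 * L := by
      rw [Fintype.card_prod, Nat.cast_mul, Real.logb_mul hcard hcard, logb_card_vec]
      ring

lemma le_entropy_target_zero (L : ℕ) : (L : ℝ) ≤ entropy (messageLaw L) (target 0) := by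
  have hμ := messageLaw_mem_stdSimplex L
  linarith [entropy_messages L, entropy_prod_le_add hμ (target 0) (target 1),
    entropy_vec_le hμ (target (L := L) 1)]

namespace CodeBase

/-- The answer of database `n` to the query `q`, as a function of the two messages. -/
def answer (C : CodeBase L Q) (n : Fin 2) (q : Q) (w : Msg L × Msg L) :
    Fin (C.blen n q) → ZMod 2 :=
  C.ans n q (C.phi n w)

lemma answer_factorsThrough_phi (C : CodeBase L Q) (n : Fin 2) (q : Q) :
    (C.answer n q).FactorsThrough (C.phi n) :=
  fun _ _ => congrArg (C.ans n q)

lemma law_query_eq (C : CodeBase L Q) (n : Fin 2) :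
    law (C.P 0) (fun qq => if n = 0 then qq.1 else qq.2) =
      law (C.P 1) (fun qq => if n = 0 then qq.1 else qq.2) := by
  funext q
  have hfiber : ((Finset.univ.filter fun w => C.phi n w = C.phi n 0).card : ℝ) ≠ 0 := by
    exact_mod_cast (Finset.card_pos.mpr ⟨0, by simp⟩).ne'
  have h := mul_right_cancel₀ hfiber (C.privacy n q (C.phi n 0))
  simp only [law, Finset.sum_filter]
  convert h

lemma target_factorsThrough_answers {C : CodeBase L Q} (hC : IsZeroError C) (k : Fin 2)
    {qq : Q × Q} (hqq : C.P k qq ≠ 0) :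
    (target k).FactorsThrough (Function.prod (C.answer 0 qq.1) (C.answer 1 qq.2)) := by
  intro w w' h
  obtain ⟨h₀, h₁⟩ := Prod.ext_iff.mp h
  calc
    target k w = retrieved C k qq w := (hC k w qq hqq).symm
    _ = retrieved C k qq w' := congrArg₂ (C.dec k qq.1 qq.2) h₀ h₁
    _ = target k w' := hC k w' qq hqq

lemma isPrivateRetrieval {C : CodeBase L Q} (hC : IsZeroError C) :
    IsPrivateRetrieval (C.P 0) (C.P 1) (target 0) (target 1) (C.answer 0) (C.answer 1) where
  mem_stdSimplex := ⟨C.P_nonneg 0, C.P_sum 0⟩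
  mem_stdSimplex' := ⟨C.P_nonneg 1, C.P_sum 1⟩
  law_fst := C.law_query_eq 0
  law_snd := C.law_query_eq 1
  decodable _ := target_factorsThrough_answers hC 0
  decodable' _ := target_factorsThrough_answers hC 1

lemma sum_entropy_answer_le (C : CodeBase L Q) :
    ∑ qq, C.P 0 qq * (entropy (messageLaw L) (C.answer 0 qq.1) +
        entropy (messageLaw L) (C.answer 1 qq.2)) ≤
      betaRate C 0 + betaRate C 1 := by
  have hμ := messageLaw_mem_stdSimplex L
  rw [betaRate, betaRate, ← Finset.sum_add_distrib]
  simp only [← mul_add]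
  exact sum_mul_le_sum_mul_of_ne_zero (C.P_nonneg 0) fun qq _ =>
    add_le_add (entropy_vec_le hμ (C.answer 0 qq.1)) (entropy_vec_le hμ (C.answer 1 qq.2))

theorem twenty_mul_length_le {C : CodeBase L Q} (hC : IsZeroError C) :
    20 * (L : ℝ) ≤ 3 * (C.stor 0 + C.stor 1) + 8 * (betaRate C 0 + betaRate C 1) := by
  have hμ := messageLaw_mem_stdSimplex L
  have tradeoff := (isPrivateRetrieval hC).nine_mul_entropy_add_two_mul_entropy_le hμ
    (S₁ := C.phi 0) (S₂ := C.phi 1) (fun _ _ => congrArg (C.phi 0)) (fun _ _ => congrArg (C.phi 1))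
    (C.answer_factorsThrough_phi 0) (C.answer_factorsThrough_phi 1)
  linarith [entropy_messages L, le_entropy_target_zero L, C.sum_entropy_answer_le,
    entropy_vec_le hμ (C.phi 0), entropy_vec_le hμ (C.phi 1)]

end CodeBase

end Code

/-- Every pair `(ᾱ, β̄)` in the achievable storage-retrieval rate region
of the (2,2) PIR problem satisfies `3ᾱ + 8β̄ ≥ 10`. -/
theorem statement6 (ab : ℝ × ℝ) (h : ab ∈ Region) : 10 ≤ 3 * ab.1 + 8 * ab.2 := by
  refine le_of_forall_pos_le_add fun δ hδ => ?_
  obtain ⟨L₀, hL₀⟩ := h (δ / 11) (by positivity)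
  set L := max L₀ 1
  obtain ⟨C, hC, hstor, hbeta⟩ := hL₀ L (le_max_left L₀ 1)
  have hL : (0 : ℝ) < L := by exact_mod_cast le_max_right L₀ 1
  have bound := CodeBase.twenty_mul_length_le hC
  rw [Nat.cast_add] at hstor
  exact le_of_mul_le_mul_left (by linarith) hL

end PIR
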